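/- arXiv:1203.0046 — 8 statements merged into one kernel-verified Lean document; each statement's English description precedes it below -/
import Mathlib

section
/- Let u₂ > 0 and let x : ℝ → ℝ be twice differentiable with x(t) > 0 for all t and ẍ(t) = −u₂·x(t) + 1/x(t)³ for all t. Then x is periodic with period π/√u₂: for all t ∈ ℝ, x(t + π/√u₂) = x(t) and ẋ(t + π/√u₂) = ẋ(t). (Every Y-trajectory in the open half-plane x₁ > 0 is a closed curve of period π/√u₂.) -/
open Real

/-- Every Y-trajectory (solution of ẍ = −u₂·x + 1/x³ staying in `x > 0`)
is periodic with period `π / √u₂`: both the position and the velocity return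
to their values after time `π / √u₂`. -/
theorem Y_trajectory_periodic
    (u₂ : ℝ) (hu₂ : 0 < u₂) (x : ℝ → ℝ)
    (hpos : ∀ t, 0 < x t)
    (hd₁ : Differentiable ℝ x)
    (hd₂ : Differentiable ℝ (deriv x))
    (hode : ∀ t, deriv (deriv x) t = -u₂ * x t + 1 / (x t) ^ 3) :
    ∀ t : ℝ, x (t + π / Real.sqrt u₂) = x t ∧
      deriv x (t + π / Real.sqrt u₂) = deriv x t := by
  obtain ⟨s, hs, hsu⟩ : ∃ s, 0 < s ∧ s = Real.sqrt u₂ := ⟨_, Real.sqrt_pos.2 hu₂, rfl⟩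
  have hu : u₂ = s ^ 2 := by rw [hsu, Real.sq_sqrt hu₂.le]
  rw [← hsu]
  have hx : ∀ t, HasDerivAt x (deriv x t) t := fun t => (hd₁ t).hasDerivAt
  have hv : ∀ t, HasDerivAt (deriv x) (-u₂ * x t + 1 / (x t) ^ 3) t := fun t => by
    rw [← hode t]; exact (hd₂ t).hasDerivAt
  have hconst : ∀ f : ℝ → ℝ, (∀ t, HasDerivAt f 0 t) → ∀ a b, f a = f b := fun f hf =>
    is_const_of_deriv_eq_zero (fun t => (hf t).differentiableAt) (fun t => (hf t).deriv)
  have hE := hconst (fun t => (deriv x t) ^ 2 + u₂ * (x t) ^ 2 + 1 / (x t) ^ 2) (fun t => by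
    have h0 := (hpos t).ne'
    have h := (((hv t).pow 2).add (((hx t).pow 2).const_mul u₂)).add
      (((hx t).pow 2).inv (pow_ne_zero 2 h0))
    refine (h.congr_deriv ?_).congr_of_eventuallyEq ?_
    · simp only [Pi.pow_apply]
      field_simp
      push_cast
      ring
    · refine Filter.Eventually.of_forall fun y => ?_
      simp [one_div])
  obtain ⟨c, hc⟩ : ∃ c, ∀ t, (deriv x t) ^ 2 + u₂ * (x t) ^ 2 + 1 / (x t) ^ 2 = c :=
    ⟨_, fun t => hE t 0⟩
  have hw : ∀ t, HasDerivAt (fun t => x t ^ 2 - c / (2 * u₂)) (2 * x t * deriv x t) t := fun t => by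
    have h := ((hx t).pow 2).sub_const (c / (2 * u₂))
    refine h.congr_deriv ?_
    push_cast
    ring
  have hp : ∀ t, HasDerivAt (fun t => x t * deriv x t / s)
      (-(2 * s) * (x t ^ 2 - c / (2 * u₂))) t := fun t => by
    have h0 := (hpos t).ne'
    have h := ((hx t).mul (hv t)).div_const s
    refine h.congr_deriv ?_
    rw [← hc t, hu]
    field_simp
    ring
  have hl : ∀ t, HasDerivAt (fun t : ℝ => 2 * s * t) (2 * s) t := fun t => by
    simpa using (hasDerivAt_id t).const_mul (2 * s)
  have hA := hconst (fun t => (x t ^ 2 - c / (2 * u₂)) * cos (2 * s * t)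
      - x t * deriv x t / s * sin (2 * s * t)) (fun t => by
    refine (((hw t).mul (hl t).cos).sub ((hp t).mul (hl t).sin)).congr_deriv ?_
    field_simp
    ring)
  have hB := hconst (fun t => (x t ^ 2 - c / (2 * u₂)) * sin (2 * s * t)
      + x t * deriv x t / s * cos (2 * s * t)) (fun t => by
    refine (((hw t).mul (hl t).sin).add ((hp t).mul (hl t).cos)).congr_deriv ?_
    field_simp
    ring)
  have key : ∀ t, x (t + π / s) = x t := fun t => by
    have e : 2 * s * (t + π / s) = 2 * s * t + 2 * π := by field_simp
    have a := hA (t + π / s) t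
    have b := hB (t + π / s) t
    simp only [e, cos_add_two_pi, sin_add_two_pi] at a b
    have hsc := sin_sq_add_cos_sq (2 * s * t)
    have : x (t + π / s) ^ 2 = x t ^ 2 := by
      linear_combination cos (2 * s * t) * a + sin (2 * s * t) * b
        - (x (t + π / s) ^ 2 - x t ^ 2) * hsc
    exact (pow_left_inj₀ (hpos _).le (hpos _).le two_ne_zero).1 this
  intro t
  refine ⟨key t, ?_⟩
  rw [← deriv_comp_add_const]
  congr 1
  exact funext key
end

section
/- On the domain D = {(x₁,x₂) ∈ ℝ² : x₁ > 0}, with f(x₁,x₂) = (x₂, 1/x₁³) and g(x₁,x₂) = (0, −x₁), the iterated Lie bracket relations [f,[f,g]] = 2f and [g,[f,g]] = −2g hold at every point of D; in particular the Lie algebra generated by f and g is finite dimensional, spanned by f, g and [f,g]. -/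
/-- The drift vector field `f(x₁,x₂) = (x₂, 1/x₁³)`. -/
noncomputable def driftField (p : ℝ × ℝ) : ℝ × ℝ := (p.2, 1 / p.1 ^ 3)

/-- The control vector field `g(x₁,x₂) = (0, −x₁)`. -/
noncomputable def controlField (p : ℝ × ℝ) : ℝ × ℝ := (0, -p.1)

/-- The Lie bracket of vector fields `h, k` on `ℝ²`:
`[h,k](x) = Dk(x)·h(x) − Dh(x)·k(x)`. -/
noncomputable def lieBracketVF (h k : ℝ × ℝ → ℝ × ℝ) (p : ℝ × ℝ) : ℝ × ℝ :=
  fderiv ℝ k p (h p) - fderiv ℝ h p (k p)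

theorem fderiv_drift (p v : ℝ × ℝ) (hp : 0 < p.1) :
    fderiv ℝ driftField p v = (v.2, -3 / p.1 ^ 4 * v.1) := by
  have h0 : p.1 ≠ 0 := hp.ne'
  have hd : HasDerivAt (fun t : ℝ => 1 / t ^ 3) (-3 / p.1 ^ 4) p.1 := by
    have h := (hasDerivAt_pow 3 p.1).inv (pow_ne_zero 3 h0)
    have h2 : HasDerivAt (fun t : ℝ => 1 / t ^ 3) _ p.1 :=
      h.congr_of_eventuallyEq (Filter.Eventually.of_forall fun t => by simp)
    convert h2 using 1
    field_simp
    norm_num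
  have h1 := hd.comp_hasFDerivAt p (hasFDerivAt_fst (𝕜 := ℝ) (p := p))
  have h2 : HasFDerivAt driftField _ p := (hasFDerivAt_snd (𝕜 := ℝ) (p := p)).prodMk h1
  rw [h2.fderiv]
  simp

theorem fderiv_control (p v : ℝ × ℝ) :
    fderiv ℝ controlField p v = (0, -v.1) := by
  have h2 : HasFDerivAt controlField _ p :=
    (hasFDerivAt_const (𝕜 := ℝ) (0 : ℝ) p).prodMk (hasFDerivAt_fst (𝕜 := ℝ) (p := p)).neg
  rw [h2.fderiv]
  simp

theorem bracket_fg (p : ℝ × ℝ) (hp : 0 < p.1) :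
    lieBracketVF driftField controlField p = (p.1, -p.2) := by
  rw [lieBracketVF, fderiv_drift _ _ hp, fderiv_control]
  simp [driftField, controlField]

theorem fderiv_bracket (p v : ℝ × ℝ) (hp : 0 < p.1) :
    fderiv ℝ (lieBracketVF driftField controlField) p v = (v.1, -v.2) := by
  have he : lieBracketVF driftField controlField =ᶠ[nhds p] fun q => (q.1, -q.2) := by
    filter_upwards [(isOpen_lt continuous_const continuous_fst).mem_nhds hp] with q hq
    exact bracket_fg q hq
  have h2 : HasFDerivAt (fun q : ℝ × ℝ => (q.1, -q.2)) _ p :=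
    (hasFDerivAt_fst (𝕜 := ℝ) (p := p)).prodMk (hasFDerivAt_snd (𝕜 := ℝ) (p := p)).neg
  rw [he.fderiv_eq, h2.fderiv]
  simp

theorem bracket_f_fg (p : ℝ × ℝ) (hp : 0 < p.1) :
    lieBracketVF driftField (lieBracketVF driftField controlField) p
      = (2 : ℝ) • driftField p := by
  have h0 : p.1 ≠ 0 := hp.ne'
  rw [lieBracketVF, fderiv_bracket _ _ hp, fderiv_drift _ _ hp, bracket_fg p hp]
  ext
  · simp [driftField]; ring
  · simp [driftField]; field_simp; ring

theorem bracket_g_fg (p : ℝ × ℝ) (hp : 0 < p.1) :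
    lieBracketVF controlField (lieBracketVF driftField controlField) p
      = (-2 : ℝ) • controlField p := by
  rw [lieBracketVF, fderiv_bracket _ _ hp, fderiv_control, bracket_fg p hp]
  ext
  · simp [controlField]
  · simp [controlField]; ring

theorem bracket_swap (h k : ℝ × ℝ → ℝ × ℝ) (p : ℝ × ℝ) :
    lieBracketVF h k p = - lieBracketVF k h p := by
  simp [lieBracketVF]

theorem bracket_self (h : ℝ × ℝ → ℝ × ℝ) (p : ℝ × ℝ) :
    lieBracketVF h h p = 0 := by
  simp [lieBracketVF]

/-- On `D = {(x₁,x₂) : x₁ > 0}`, with `f(x₁,x₂) = (x₂, 1/x₁³)` and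
`g(x₁,x₂) = (0, −x₁)`, the iterated bracket relations `[f,[f,g]] = 2f` and
`[g,[f,g]] = −2g` hold; in particular the Lie algebra generated by `f` and `g`
is finite dimensional, spanned (pointwise on `D`) by `f`, `g` and `[f,g]`:
the bracket of any two fields among `f, g, [f,g]` is, on `D`, a fixed linear
combination of `f`, `g` and `[f,g]`. -/
theorem lie_algebra_relations :
    (∀ p : ℝ × ℝ, 0 < p.1 →
        lieBracketVF driftField (lieBracketVF driftField controlField) p
          = (2 : ℝ) • driftField p) ∧
    (∀ p : ℝ × ℝ, 0 < p.1 →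
        lieBracketVF controlField (lieBracketVF driftField controlField) p
          = (-2 : ℝ) • controlField p) ∧
    (∀ h k : ℝ × ℝ → ℝ × ℝ,
        h ∈ ({driftField, controlField, lieBracketVF driftField controlField} :
          Set (ℝ × ℝ → ℝ × ℝ)) →
        k ∈ ({driftField, controlField, lieBracketVF driftField controlField} :
          Set (ℝ × ℝ → ℝ × ℝ)) →
        ∃ a b c : ℝ, ∀ p : ℝ × ℝ, 0 < p.1 →
          lieBracketVF h k p
            = a • driftField p + b • controlField p
              + c • lieBracketVF driftField controlField p) := by
  refine ⟨bracket_f_fg, bracket_g_fg, ?_⟩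
  intro h k hh hk
  simp only [Set.mem_insert_iff, Set.mem_singleton_iff] at hh hk
  rcases hh with rfl | rfl | rfl <;> rcases hk with rfl | rfl | rfl
  · exact ⟨0, 0, 0, fun p _ => by simp [bracket_self]⟩
  · exact ⟨0, 0, 1, fun p _ => by simp⟩
  · exact ⟨2, 0, 0, fun p hp => by simp [bracket_f_fg p hp]⟩
  · exact ⟨0, 0, -1, fun p _ => by simp [bracket_swap controlField driftField]⟩
  · exact ⟨0, 0, 0, fun p _ => by simp [bracket_self]⟩
  · exact ⟨0, -2, 0, fun p hp => by simp [bracket_g_fg p hp]⟩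
  · exact ⟨-2, 0, 0, fun p hp => by rw [bracket_swap, bracket_f_fg p hp]; simp⟩
  · exact ⟨0, 2, 0, fun p hp => by rw [bracket_swap, bracket_g_fg p hp]; simp⟩
  · exact ⟨0, 0, 0, fun p _ => by simp [bracket_self]⟩
end

section
/- Let u₂ ∈ ℝ and set Y = f + u₂·g on D = {(x₁,x₂) ∈ ℝ² : x₁ > 0}, where f(x₁,x₂) = (x₂, 1/x₁³) and g(x₁,x₂) = (0, −x₁). Define ad⁰Y(g) = g and ad^{m}Y(g) = [Y, ad^{m−1}Y(g)] for m ≥ 1. Then for every integer n ≥ 0 and every point of D: ad^{2n+1}Y(g) = (−4u₂)ⁿ·[f,g] and ad^{2n+2}Y(g) = 2·(−4u₂)ⁿ·(f − u₂·g). -/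
/-- The vector field `Y = f + u₂·g`. -/
noncomputable def Yfield (u₂ : ℝ) (p : ℝ × ℝ) : ℝ × ℝ :=
  driftField p + u₂ • controlField p

/-- Iterated adjoint: `ad⁰Y(g) = g`, `adᵐY(g) = [Y, ad^{m−1}Y(g)]`. -/
noncomputable def adYg (u₂ : ℝ) : ℕ → (ℝ × ℝ → ℝ × ℝ)
  | 0 => controlField
  | m + 1 => lieBracketVF (Yfield u₂) (adYg u₂ m)

noncomputable def WF (a b c : ℝ) (p : ℝ × ℝ) : ℝ × ℝ :=
  (a * p.1 + b * p.2, c * p.1 - a * p.2 + b * (p.1 ^ 3)⁻¹)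

lemma WF_fderiv (a b c : ℝ) (p v : ℝ × ℝ) (hp : 0 < p.1) :
    fderiv ℝ (WF a b c) p v
      = (a * v.1 + b * v.2, c * v.1 - a * v.2 - 3 * b * v.1 / p.1 ^ 4) := by
  have h1 : HasFDerivAt (fun q : ℝ × ℝ => q.1) (ContinuousLinearMap.fst ℝ ℝ ℝ) p := hasFDerivAt_fst
  have h2 : HasFDerivAt (fun q : ℝ × ℝ => q.2) (ContinuousLinearMap.snd ℝ ℝ ℝ) p := hasFDerivAt_snd
  have h3 : HasDerivAt (fun x : ℝ => (x ^ 3)⁻¹) (-3 / p.1 ^ 4) p.1 := by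
    have h0 : HasDerivAt (fun x : ℝ => (x ^ 3)⁻¹) _ p.1 :=
      (hasDerivAt_pow 3 p.1).inv (by positivity)
    refine h0.congr_deriv ?_
    push_cast
    field_simp
  have h4 := h3.comp_hasFDerivAt p h1
  have h := ((h1.const_mul a).add (h2.const_mul b)).prodMk
    (((h1.const_mul c).sub (h2.const_mul a)).add (h4.const_mul b))
  have h' : HasFDerivAt (WF a b c) _ p := h
  rw [h'.fderiv]
  ext
  · simp
  · simp
    ring

lemma WF_bracket (c a' b' c' : ℝ) (p : ℝ × ℝ) (hp : 0 < p.1) :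
    lieBracketVF (WF 0 1 c) (WF a' b' c') p
      = WF (b' * c - c') (2 * a') (-2 * a' * c) p := by
  rw [lieBracketVF, WF_fderiv _ _ _ _ _ hp, WF_fderiv _ _ _ _ _ hp]
  ext
  · simp [WF]; ring
  · simp [WF]; field_simp; ring

lemma lieBracketVF_congr (h k k' : ℝ × ℝ → ℝ × ℝ) (hk : ∀ p : ℝ × ℝ, 0 < p.1 → k p = k' p)
    (p : ℝ × ℝ) (hp : 0 < p.1) : lieBracketVF h k p = lieBracketVF h k' p := by
  have : k =ᶠ[nhds p] k' := by
    filter_upwards [(isOpen_lt continuous_const continuous_fst).mem_nhds hp] with q hq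
    exact hk q hq
  rw [lieBracketVF, lieBracketVF, this.fderiv_eq, hk p hp]

lemma control_eq : controlField = WF 0 0 (-1) := by
  funext p; simp [controlField, WF]

lemma drift_eq : driftField = WF 0 1 0 := by
  funext p; simp [driftField, WF]

lemma Y_eq (u : ℝ) : Yfield u = WF 0 1 (-u) := by
  funext p; ext <;> simp [Yfield, driftField, controlField, WF]; ring

lemma ad_step (u a b c : ℝ) (m : ℕ) (h : ∀ p : ℝ × ℝ, 0 < p.1 → adYg u m p = WF a b c p)
    (p : ℝ × ℝ) (hp : 0 < p.1) :
    adYg u (m + 1) p = WF (-(b * u) - c) (2 * a) (2 * a * u) p := by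
  rw [adYg, lieBracketVF_congr _ _ _ h p hp, Y_eq, WF_bracket _ _ _ _ _ hp]
  congr 1 <;> ring

lemma ad_odd (u : ℝ) (n : ℕ) : ∀ p : ℝ × ℝ, 0 < p.1 →
    adYg u (2 * n + 1) p = WF ((-4 * u) ^ n) 0 0 p := by
  induction n with
  | zero =>
    intro p hp
    rw [ad_step u 0 0 (-1) 0 (fun p _ => by rw [adYg, control_eq]) p hp]
    simp
  | succ n ih =>
    intro p hp
    have := ad_step u _ _ _ _ (ad_step u _ _ _ _ ih) p hp
    rw [show 2 * (n + 1) + 1 = 2 * n + 1 + 1 + 1 by ring, this]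
    congr 1 <;> ring

/-- For `Y = f + u₂ g`, at every point of `D = {x₁ > 0}`:
`ad^{2n+1}Y(g) = (−4u₂)ⁿ [f,g]` and `ad^{2n+2}Y(g) = 2(−4u₂)ⁿ (f − u₂ g)`. -/
theorem adY_powers (u₂ : ℝ) (n : ℕ) (p : ℝ × ℝ) (hp : 0 < p.1) :
    adYg u₂ (2 * n + 1) p
      = ((-4 * u₂) ^ n) • lieBracketVF driftField controlField p ∧
    adYg u₂ (2 * n + 2) p
      = (2 * (-4 * u₂) ^ n) • (driftField p - u₂ • controlField p) := by
  refine ⟨?_, ?_⟩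
  · rw [ad_odd u₂ n p hp, drift_eq, control_eq, WF_bracket _ _ _ _ _ hp]
    ext <;> simp [WF]
  · rw [ad_step u₂ _ _ _ _ (ad_odd u₂ n) p hp]
    ext <;> simp [WF, driftField, controlField] <;> ring
end

section
/- Let u₂ > 0, κ > 0, μ ∈ ℝ, and let (x₁,x₂) : [0,τ] → ℝ² solve ẋ₁ = x₂, ẋ₂ = −u₂·x₁ + 1/x₁³ with x₁(t) > 0 for all t, x₁(0) = κ, x₂(0) = μ, where τ ∈ (0, π/√u₂) satisfies cos(2√u₂τ) = (μ² − u₂κ²)/(μ² + u₂κ²) and sin(2√u₂τ) = −2√u₂κμ/(μ² + u₂κ²). Then κ·x₂(τ) = −μ·x₁(τ); that is, the ratio x₂/x₁ at the endpoint equals −μ/κ, so the ratio of the coordinates of consecutive switching points joined by a Y-segment has constant magnitude but opposite sign. -/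
open Real

theorem const_aux (f : ℝ → ℝ) (τ : ℝ) (hτ : 0 < τ)
    (h : ∀ t ∈ Set.Icc 0 τ, HasDerivAt f 0 t) : ∀ t ∈ Set.Icc 0 τ, f t = f 0 :=
  constant_of_has_deriv_right_zero (fun t ht => (h t ht).continuousAt.continuousWithinAt)
    (fun t ht => (h t ⟨ht.1, ht.2.le⟩).hasDerivWithinAt)

/-- Along a Y-trajectory (ẋ₁ = x₂, ẋ₂ = −u₂x₁ + 1/x₁³) starting at a switching
point `(κ, μ)` and run for the inter-switching time `τ ∈ (0, π/√u₂)` determined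
by `cos(2√u₂τ) = (μ² − u₂κ²)/(μ² + u₂κ²)` and
`sin(2√u₂τ) = −2√u₂κμ/(μ² + u₂κ²)`, the endpoint satisfies
`κ·x₂(τ) = −μ·x₁(τ)`: the coordinate ratio has constant magnitude and
opposite sign. -/
theorem Y_segment_ratio
    (u₂ κ μ τ : ℝ) (hu₂ : 0 < u₂) (hκ : 0 < κ)
    (hτ : τ ∈ Set.Ioo 0 (π / Real.sqrt u₂))
    (hcos : Real.cos (2 * Real.sqrt u₂ * τ)
      = (μ ^ 2 - u₂ * κ ^ 2) / (μ ^ 2 + u₂ * κ ^ 2))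
    (hsin : Real.sin (2 * Real.sqrt u₂ * τ)
      = -2 * Real.sqrt u₂ * κ * μ / (μ ^ 2 + u₂ * κ ^ 2))
    (x₁ x₂ : ℝ → ℝ)
    (hpos : ∀ t ∈ Set.Icc 0 τ, 0 < x₁ t)
    (hinit₁ : x₁ 0 = κ) (hinit₂ : x₂ 0 = μ)
    (hd₁ : ∀ t ∈ Set.Icc 0 τ, HasDerivAt x₁ (x₂ t) t)
    (hd₂ : ∀ t ∈ Set.Icc 0 τ,
      HasDerivAt x₂ (-u₂ * x₁ t + 1 / (x₁ t) ^ 3) t) :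
    κ * x₂ τ = -μ * x₁ τ := by
  obtain ⟨hτ0, -⟩ := hτ
  obtain ⟨s, hs, hsu⟩ : ∃ s : ℝ, 0 < s ∧ s = Real.sqrt u₂ := ⟨_, Real.sqrt_pos.2 hu₂, rfl⟩
  have hu : u₂ = s ^ 2 := by rw [hsu, Real.sq_sqrt hu₂.le]
  rw [← hsu] at hcos hsin
  clear hsu
  subst hu
  have h0 : (0:ℝ) ∈ Set.Icc 0 τ := ⟨le_rfl, hτ0.le⟩
  have h1 : τ ∈ Set.Icc 0 τ := ⟨hτ0.le, le_rfl⟩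
  have hE := const_aux (fun t => x₂ t ^ 2 + s ^ 2 * x₁ t ^ 2 + (x₁ t ^ 2)⁻¹) τ hτ0 (by
    intro t ht
    have hp := (hpos t ht).ne'
    have := (((hd₂ t ht).pow 2).add (((hd₁ t ht).pow 2).const_mul (s ^ 2))).add
      (((hd₁ t ht).pow 2).inv (pow_ne_zero 2 hp))
    refine this.congr_deriv ?_
    simp only [Pi.pow_apply]
    field_simp
    ring)
  simp only [hinit₁, hinit₂] at hE
  obtain ⟨E, hEd⟩ : ∃ E, E = μ ^ 2 + s ^ 2 * κ ^ 2 + (κ ^ 2)⁻¹ := ⟨_, rfl⟩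
  rw [← hEd] at hE
  have hc : ∀ t, HasDerivAt (fun t => cos (2 * s * t)) (-sin (2 * s * t) * (2 * s)) t := by
    intro t
    simpa using ((hasDerivAt_id t).const_mul (2 * s)).cos
  have hn : ∀ t, HasDerivAt (fun t => sin (2 * s * t)) (cos (2 * s * t) * (2 * s)) t := by
    intro t
    simpa using ((hasDerivAt_id t).const_mul (2 * s)).sin
  have hw : ∀ t ∈ Set.Icc 0 τ, HasDerivAt (fun t => 2 * s ^ 2 * x₁ t ^ 2 - E)
      (2 * s * (2 * s * (x₁ t * x₂ t))) t := by
    intro t ht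
    refine ((((hd₁ t ht).pow 2).const_mul (2 * s ^ 2)).sub_const E).congr_deriv ?_
    simp
    ring
  have hq : ∀ t ∈ Set.Icc 0 τ, HasDerivAt (fun t => 2 * s * (x₁ t * x₂ t))
      (-(2 * s) * (2 * s ^ 2 * x₁ t ^ 2 - E)) t := by
    intro t ht
    have hp := (hpos t ht).ne'
    refine (((hd₁ t ht).mul (hd₂ t ht)).const_mul (2 * s)).congr_deriv ?_
    rw [← hE t ht]
    field_simp
    ring
  have hF := const_aux (fun t => (2 * s ^ 2 * x₁ t ^ 2 - E) * cos (2 * s * t)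
      - 2 * s * (x₁ t * x₂ t) * sin (2 * s * t)) τ hτ0 (by
    intro t ht
    refine (((hw t ht).mul (hc t)).sub ((hq t ht).mul (hn t))).congr_deriv ?_
    ring) τ h1
  have hG := const_aux (fun t => (2 * s ^ 2 * x₁ t ^ 2 - E) * sin (2 * s * t)
      + 2 * s * (x₁ t * x₂ t) * cos (2 * s * t)) τ hτ0 (by
    intro t ht
    refine (((hw t ht).mul (hn t)).add ((hq t ht).mul (hc t))).congr_deriv ?_
    ring) τ h1
  simp only [hinit₁, hinit₂, mul_zero, cos_zero, sin_zero, mul_one, sub_zero, zero_add] at hF hG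
  have hcs := sin_sq_add_cos_sq (2 * s * τ)
  have hx := hpos τ h1
  have hd : 0 < μ ^ 2 + s ^ 2 * κ ^ 2 := by positivity
  set C := cos (2 * s * τ)
  set S := sin (2 * s * τ)
  generalize x₁ τ = a at *
  generalize x₂ τ = b at *
  have hW : 2 * s ^ 2 * a ^ 2 - E = (2 * s ^ 2 * κ ^ 2 - E) * C + 2 * s * (κ * μ) * S := by
    rw [← hF, ← hG]; linear_combination (-(2 * s ^ 2 * a ^ 2 - E)) * hcs
  have hQ : 2 * s * (a * b) = 2 * s * (κ * μ) * C - (2 * s ^ 2 * κ ^ 2 - E) * S := by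
    rw [← hF, ← hG]; linear_combination (-(2 * s * (a * b))) * hcs
  have ha : a ^ 2 = 1 / (μ ^ 2 + s ^ 2 * κ ^ 2) := by
    have : 2 * s ^ 2 * a ^ 2 = 2 * s ^ 2 * (1 / (μ ^ 2 + s ^ 2 * κ ^ 2)) := by
      rw [eq_add_of_sub_eq hW, hcos, hsin, hEd]
      field_simp
      ring
    exact mul_left_cancel₀ (by positivity) this
  have hb : a * b = -μ / (κ * (μ ^ 2 + s ^ 2 * κ ^ 2)) := by
    have : 2 * s * (a * b) = 2 * s * (-μ / (κ * (μ ^ 2 + s ^ 2 * κ ^ 2))) := by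
      rw [hQ, hcos, hsin, hEd]
      field_simp
      ring
    exact mul_left_cancel₀ (by positivity) this
  have : a * (κ * b) = a * (-μ * a) := by
    have e1 : a * (κ * b) = κ * (a * b) := by ring
    have e2 : a * (-μ * a) = -μ * a ^ 2 := by ring
    rw [e1, e2, ha, hb]
    field_simp
  exact mul_left_cancel₀ hx.ne' this
end

section
/- Let u₁ > 0, u₂ ≥ 1 and γ > 1. Then there exists a unique pair (κ, μ) with κ > 0 and μ > 0 satisfying μ² − u₁κ² + 1/κ² = 1 − u₁ and μ² + u₂κ² + 1/κ² = u₂γ² + 1/γ², and it is given by κ² = (u₂γ⁴ + 1 + γ²(u₁ − 1))/(γ²(u₁ + u₂)); moreover 1 < κ² < γ². (This (κ,μ) is the unique switching point of the one-switching XY trajectory from (1,0) to (γ,0).) -/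
/-- The one-switching `XY` trajectory from `(1,0)` to `(γ,0)` has a unique
switching point `(κ, μ)` in the open upper half plane, lying on the X-curve
through `(1,0)` and the Y-curve through `(γ,0)`; its abscissa satisfies
`κ² = (u₂γ⁴ + 1 + γ²(u₁ − 1))/(γ²(u₁ + u₂))` and `1 < κ² < γ²`. -/
theorem one_switching_point
    (u₁ u₂ γ : ℝ) (hu₁ : 0 < u₁) (hu₂ : 1 ≤ u₂) (hγ : 1 < γ) :
    (∃! p : ℝ × ℝ, 0 < p.1 ∧ 0 < p.2 ∧
      p.2 ^ 2 - u₁ * p.1 ^ 2 + 1 / p.1 ^ 2 = 1 - u₁ ∧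
      p.2 ^ 2 + u₂ * p.1 ^ 2 + 1 / p.1 ^ 2 = u₂ * γ ^ 2 + 1 / γ ^ 2) ∧
    (∀ κ μ : ℝ, 0 < κ → 0 < μ →
      μ ^ 2 - u₁ * κ ^ 2 + 1 / κ ^ 2 = 1 - u₁ →
      μ ^ 2 + u₂ * κ ^ 2 + 1 / κ ^ 2 = u₂ * γ ^ 2 + 1 / γ ^ 2 →
      κ ^ 2 = (u₂ * γ ^ 4 + 1 + γ ^ 2 * (u₁ - 1)) / (γ ^ 2 * (u₁ + u₂)) ∧
      1 < κ ^ 2 ∧ κ ^ 2 < γ ^ 2) := by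
  have hG : 1 < γ ^ 2 := by nlinarith
  have hD : 0 < γ ^ 2 * (u₁ + u₂) := by positivity
  obtain ⟨K, hK⟩ : ∃ K, K = (u₂ * γ ^ 4 + 1 + γ ^ 2 * (u₁ - 1)) / (γ ^ 2 * (u₁ + u₂)) := ⟨_, rfl⟩
  have hG0 : γ ^ 2 ≠ 0 := by positivity
  have hK1 : 1 < K := by
    rw [hK, lt_div_iff₀ hD]
    have h1 : 0 < (γ ^ 2 - 1) * (u₂ * γ ^ 2 - 1) :=
      mul_pos (by linarith) (by nlinarith)
    nlinarith
  have hKG : K < γ ^ 2 := by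
    rw [hK, div_lt_iff₀ hD]
    have h1 : 0 < (γ ^ 2 - 1) * (u₁ * γ ^ 2 + 1) :=
      mul_pos (by linarith) (by positivity)
    nlinarith
  have hKe : K * (u₁ + u₂) = u₂ * γ ^ 2 + 1 / γ ^ 2 - (1 - u₁) := by
    rw [hK]
    have : u₁ + u₂ ≠ 0 := by positivity
    field_simp
    ring
  have key : ∀ κ μ : ℝ, μ ^ 2 - u₁ * κ ^ 2 + 1 / κ ^ 2 = 1 - u₁ →
      μ ^ 2 + u₂ * κ ^ 2 + 1 / κ ^ 2 = u₂ * γ ^ 2 + 1 / γ ^ 2 → κ ^ 2 = K := by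
    intro κ μ h1 h2
    have : u₁ + u₂ ≠ 0 := by positivity
    apply mul_right_cancel₀ this
    linarith
  have hK0 : 0 < K := by linarith
  have hM : 0 < 1 - u₁ + u₁ * K - 1 / K := by
    have h1 : 1 / K < 1 := by rw [div_lt_one hK0]; exact hK1
    nlinarith
  refine ⟨⟨(√K, √(1 - u₁ + u₁ * K - 1 / K)), ⟨Real.sqrt_pos.2 hK0, Real.sqrt_pos.2 hM, ?_, ?_⟩, ?_⟩, ?_⟩
  · simp only [Real.sq_sqrt hK0.le, Real.sq_sqrt hM.le]
    ring
  · simp only [Real.sq_sqrt hK0.le, Real.sq_sqrt hM.le]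
    linarith
  · rintro ⟨κ, μ⟩ ⟨hκ, hμ, h1, h2⟩
    simp only at hκ hμ h1 h2
    have h := key κ μ h1 h2
    rw [h] at h1
    have hm : μ ^ 2 = 1 - u₁ + u₁ * K - 1 / K := by linarith
    rw [← hm, ← h, Real.sqrt_sq hκ.le, Real.sqrt_sq hμ.le]
  · intro κ μ _ _ h1 h2
    have h := key κ μ h1 h2
    rw [h]
    exact ⟨hK, hK1, hKG⟩
end

section
/- Let n ≥ 1 be an integer, u₁, u₂ > 0, and 0 < c₁ ≤ c₂. Then there is at most one real s with u₁ < s and 4(s + u₂) ≤ c₁² satisfying the transcendental equation (c₁ + √(c₁² − 4(s + u₂)))/(c₂ + √(c₂² − 4(s + u₂))) = ((s − u₁)/(s + u₂))ⁿ; indeed the left-hand side is a nonincreasing function of s while the right-hand side is strictly increasing on (u₁, ∞). -/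
open Real

theorem lhs_anti_aux (c₁ c₂ x y : ℝ) (hx : 0 < x) (hc₁ : 0 < c₁) (hc : c₁ ≤ c₂)
    (hxy : x < y) (hy : y ≤ c₁ ^ 2) :
    (c₁ + Real.sqrt (c₁ ^ 2 - y)) / (c₂ + Real.sqrt (c₂ ^ 2 - y))
      ≤ (c₁ + Real.sqrt (c₁ ^ 2 - x)) / (c₂ + Real.sqrt (c₂ ^ 2 - x)) := by
  have hsq : c₁ ^ 2 ≤ c₂ ^ 2 := by gcongr
  have ha : 0 < Real.sqrt (c₁ ^ 2 - x) := Real.sqrt_pos.2 (by linarith)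
  have ha' := Real.sqrt_nonneg (c₁ ^ 2 - y)
  have hb := Real.sqrt_nonneg (c₂ ^ 2 - x)
  have hb' := Real.sqrt_nonneg (c₂ ^ 2 - y)
  have ea := Real.sq_sqrt (show 0 ≤ c₁ ^ 2 - x by linarith)
  have ea' := Real.sq_sqrt (show 0 ≤ c₁ ^ 2 - y by linarith)
  have eb := Real.sq_sqrt (show 0 ≤ c₂ ^ 2 - x by linarith)
  have eb' := Real.sq_sqrt (show 0 ≤ c₂ ^ 2 - y by linarith)
  have h1 : Real.sqrt (c₁ ^ 2 - x) ≤ Real.sqrt (c₂ ^ 2 - x) := Real.sqrt_le_sqrt (by linarith)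
  have h2 : Real.sqrt (c₁ ^ 2 - y) ≤ Real.sqrt (c₂ ^ 2 - y) := Real.sqrt_le_sqrt (by linarith)
  have h3 : Real.sqrt (c₁ ^ 2 - y) ≤ Real.sqrt (c₁ ^ 2 - x) := Real.sqrt_le_sqrt (by linarith)
  have h4 : Real.sqrt (c₂ ^ 2 - y) ≤ Real.sqrt (c₂ ^ 2 - x) := Real.sqrt_le_sqrt (by linarith)
  generalize Real.sqrt (c₁ ^ 2 - x) = a at *
  generalize Real.sqrt (c₁ ^ 2 - y) = a' at *
  generalize Real.sqrt (c₂ ^ 2 - x) = b at *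
  generalize Real.sqrt (c₂ ^ 2 - y) = b' at *
  have k1 : a' * b ≤ a * b' := by
    refine (sq_le_sq₀ (by positivity) (by positivity)).1 ?_
    rw [mul_pow, mul_pow, ea, ea', eb, eb']
    nlinarith
  have k2 : b - b' ≤ a - a' := by
    by_contra h
    push Not at h
    have e : (b - b') * (b + b') = (a - a') * (a + a') := by linarith
    nlinarith [mul_pos (sub_pos.2 h) (show 0 < b + b' by linarith),
      mul_nonneg (sub_nonneg.2 h3) (show 0 ≤ b + b' - (a + a') by linarith)]
  rw [div_le_div_iff₀ (by linarith) (by linarith)]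
  nlinarith [mul_le_mul_of_nonneg_left k2 hc₁.le,
    mul_nonneg (sub_nonneg.2 hc) (sub_nonneg.2 h3)]

/-- The transcendental equation
`(c₁ + √(c₁² − 4(s+u₂)))/(c₂ + √(c₂² − 4(s+u₂))) = ((s − u₁)/(s + u₂))ⁿ`
has at most one solution `s` with `u₁ < s` and `4(s + u₂) ≤ c₁²`: the
left-hand side is nonincreasing in `s` on that range while the right-hand side
is strictly increasing on `(u₁, ∞)`. -/
theorem transcendental_unique
    (n : ℕ) (hn : 1 ≤ n) (u₁ u₂ c₁ c₂ : ℝ)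
    (hu₁ : 0 < u₁) (hu₂ : 0 < u₂) (hc₁ : 0 < c₁) (hc : c₁ ≤ c₂) :
    (∀ s t : ℝ, u₁ < s → 4 * (s + u₂) ≤ c₁ ^ 2 →
      u₁ < t → 4 * (t + u₂) ≤ c₁ ^ 2 →
      (c₁ + Real.sqrt (c₁ ^ 2 - 4 * (s + u₂)))
          / (c₂ + Real.sqrt (c₂ ^ 2 - 4 * (s + u₂)))
        = ((s - u₁) / (s + u₂)) ^ n →
      (c₁ + Real.sqrt (c₁ ^ 2 - 4 * (t + u₂)))
          / (c₂ + Real.sqrt (c₂ ^ 2 - 4 * (t + u₂)))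
        = ((t - u₁) / (t + u₂)) ^ n →
      s = t) ∧
    (∀ s t : ℝ, u₁ < s → s < t → 4 * (t + u₂) ≤ c₁ ^ 2 →
      (c₁ + Real.sqrt (c₁ ^ 2 - 4 * (t + u₂)))
          / (c₂ + Real.sqrt (c₂ ^ 2 - 4 * (t + u₂)))
        ≤ (c₁ + Real.sqrt (c₁ ^ 2 - 4 * (s + u₂)))
          / (c₂ + Real.sqrt (c₂ ^ 2 - 4 * (s + u₂)))) ∧
    (∀ s t : ℝ, u₁ < s → s < t →
      ((s - u₁) / (s + u₂)) ^ n < ((t - u₁) / (t + u₂)) ^ n) := by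
  have A : ∀ s t : ℝ, u₁ < s → s < t → 4 * (t + u₂) ≤ c₁ ^ 2 →
      (c₁ + Real.sqrt (c₁ ^ 2 - 4 * (t + u₂)))
          / (c₂ + Real.sqrt (c₂ ^ 2 - 4 * (t + u₂)))
        ≤ (c₁ + Real.sqrt (c₁ ^ 2 - 4 * (s + u₂)))
          / (c₂ + Real.sqrt (c₂ ^ 2 - 4 * (s + u₂))) := by
    intro s t hs hst ht
    exact lhs_anti_aux c₁ c₂ _ _ (by linarith) hc₁ hc (by linarith) ht
  have B : ∀ s t : ℝ, u₁ < s → s < t →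
      ((s - u₁) / (s + u₂)) ^ n < ((t - u₁) / (t + u₂)) ^ n := by
    intro s t hs hst
    refine pow_lt_pow_left₀ ?_ (div_nonneg (by linarith) (by linarith)) (by omega)
    rw [div_lt_div_iff₀ (by linarith) (by linarith)]
    nlinarith
  refine ⟨?_, A, B⟩
  intro s t hs hs' ht ht' es et
  rcases lt_trichotomy s t with h | h | h
  · have := A s t hs h ht'
    have := B s t hs h
    linarith
  · exact h
  · have := A t s ht h hs'
    have := B t s ht h
    linarith
end

section
/- Let u₁ ≥ 1, u₂ ≥ 1 and γ > 1. Set t₁ = (1/√u₁)·arsinh(√(u₁(γ² − 1)(u₂γ² − 1)/(γ²(u₁ + u₂)(u₁ + 1)))) and t₂ = (1/√u₂)·arcsin(√(u₂(γ² − 1)(u₁γ² + 1)/((u₁ + u₂)(u₂γ⁴ − 1)))). Then t₁, t₂ > 0 and there exists a continuous, piecewise continuously differentiable curve (x₁,x₂) : [0, t₁ + t₂] → ℝ² with x₁(t) > 0 for all t, (x₁,x₂)(0) = (1,0), (x₁,x₂)(t₁+t₂) = (γ,0), satisfying ẋ₁ = x₂ on [0, t₁+t₂], ẋ₂ = u₁x₁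 + 1/x₁³ on [0, t₁], and ẋ₂ = −u₂x₁ + 1/x₁³ on [t₁, t₁+t₂]. Hence the bang-bang control taking value −u₁ on [0,t₁] and u₂ on [t₁, t₁+t₂] transfers (1,0) to (γ,0) in total time T₀ = t₁ + t₂. -/
open Real

lemma erm_sqrt {y d : ℝ → ℝ} {e u t : ℝ} (hy : HasDerivAt y (d t) t)
    (hd : HasDerivAt d e t) (hp : 0 < y t)
    (h : y t * e / 2 - d t ^ 2 / 4 = 1 - u * y t ^ 2) :
    HasDerivAt (fun s => √(y s)) (d t / (2 * √(y t))) t ∧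
    HasDerivAt (fun s => d s / (2 * √(y s))) (-u * √(y t) + 1 / (√(y t)) ^ 3) t := by
  have h1 := hy.sqrt hp.ne'
  refine ⟨h1, ?_⟩
  have hr : 0 < √(y t) := Real.sqrt_pos.2 hp
  have h2 := hd.div (h1.const_mul 2) (by positivity)
  refine h2.congr_deriv ?_
  have hs : y t = √(y t) ^ 2 := (Real.sq_sqrt hp.le).symm
  generalize √(y t) = r at *
  rw [hs] at h
  field_simp
  linear_combination 4 * h

lemma glue_deriv {f g : ℝ → ℝ} {c f' : ℝ} (hf : HasDerivAt f f' c) (hg : HasDerivAt g f' c)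
    (h : f c = g c) : HasDerivAt (fun t => if t ≤ c then f t else g t) f' c := by
  have h1 : HasDerivWithinAt (fun t => if t ≤ c then f t else g t) f' (Set.Iic c) c := by
    refine hf.hasDerivWithinAt.congr (fun t ht => if_pos ht) (if_pos le_rfl)
  have h2 : HasDerivWithinAt (fun t => if t ≤ c then f t else g t) f' (Set.Ici c) c := by
    refine hg.hasDerivWithinAt.congr (fun t ht => ?_) (by simp [h])
    rcases eq_or_lt_of_le (Set.mem_Ici.1 ht) with rfl | h3
    · simp [h]
    · simp [not_le.2 h3]
  have := h1.union h2
  rwa [Set.Iic_union_Ici, hasDerivWithinAt_univ] at this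

lemma glue_all {f g f' g' : ℝ → ℝ} {c : ℝ} (hf : ∀ t, HasDerivAt f (f' t) t)
    (hg : ∀ t, HasDerivAt g (g' t) t)
    (h : f c = g c) (h' : f' c = g' c) (t : ℝ) :
    HasDerivAt (fun t => if t ≤ c then f t else g t) (if t ≤ c then f' t else g' t) t := by
  rcases lt_trichotomy t c with h1 | rfl | h1
  · rw [if_pos h1.le]
    refine (hf t).congr_of_eventuallyEq ?_
    filter_upwards [gt_mem_nhds h1] with s hs
    exact if_pos hs.le
  · rw [if_pos le_rfl]
    exact glue_deriv (hf t) (h' ▸ hg t) h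
  · rw [if_neg (not_le.2 h1)]
    refine (hg t).congr_of_eventuallyEq ?_
    filter_upwards [lt_mem_nhds h1] with s hs
    exact if_neg (not_le.2 hs)

/-- The bang-bang control taking the value `−u₁` on `[0, t₁]` and `u₂` on
`[t₁, t₁ + t₂]` (with `t₁, t₂` given by the explicit formulas below) transfers
the state `(1,0)` to `(γ,0)` in total time `T₀ = t₁ + t₂`: there is a
continuous, piecewise continuously differentiable trajectory `(x₁, x₂)`
staying in `{x₁ > 0}`, satisfying `ẋ₁ = x₂` throughout,
`ẋ₂ = u₁x₁ + 1/x₁³` on the first piece and `ẋ₂ = −u₂x₁ + 1/x₁³` on the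
second. -/
theorem one_switching_transfer
    (u₁ u₂ γ : ℝ) (hu₁ : 1 ≤ u₁) (hu₂ : 1 ≤ u₂) (hγ : 1 < γ)
    (t₁ t₂ : ℝ)
    (ht₁ : t₁ = (1 / Real.sqrt u₁) * Real.arsinh (Real.sqrt
      (u₁ * (γ ^ 2 - 1) * (u₂ * γ ^ 2 - 1) / (γ ^ 2 * (u₁ + u₂) * (u₁ + 1)))))
    (ht₂ : t₂ = (1 / Real.sqrt u₂) * Real.arcsin (Real.sqrt
      (u₂ * (γ ^ 2 - 1) * (u₁ * γ ^ 2 + 1) / ((u₁ + u₂) * (u₂ * γ ^ 4 - 1))))) :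
    0 < t₁ ∧ 0 < t₂ ∧
    ∃ x₁ x₂ : ℝ → ℝ,
      ContinuousOn x₁ (Set.Icc 0 (t₁ + t₂)) ∧
      ContinuousOn x₂ (Set.Icc 0 (t₁ + t₂)) ∧
      (∀ t ∈ Set.Icc 0 (t₁ + t₂), 0 < x₁ t) ∧
      x₁ 0 = 1 ∧ x₂ 0 = 0 ∧ x₁ (t₁ + t₂) = γ ∧ x₂ (t₁ + t₂) = 0 ∧
      (∀ t ∈ Set.Icc 0 (t₁ + t₂),
        HasDerivWithinAt x₁ (x₂ t) (Set.Icc 0 (t₁ + t₂)) t) ∧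
      (∀ t ∈ Set.Icc 0 t₁,
        HasDerivWithinAt x₂ (u₁ * x₁ t + 1 / (x₁ t) ^ 3) (Set.Icc 0 t₁) t) ∧
      (∀ t ∈ Set.Icc t₁ (t₁ + t₂),
        HasDerivWithinAt x₂ (-u₂ * x₁ t + 1 / (x₁ t) ^ 3)
          (Set.Icc t₁ (t₁ + t₂)) t) := by
  have hg2 : 1 < γ ^ 2 := by nlinarith
  have hg4 : 1 < γ ^ 4 := by nlinarith
  have hp1 : 0 < u₂ * γ ^ 2 - 1 := by nlinarith
  have hp2 : 0 < u₂ * γ ^ 4 - 1 := by nlinarith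
  have hp3 : 0 < γ ^ 2 - 1 := by linarith
  have hγ0 : 0 < γ := by linarith
  have hu10 : 0 < u₁ := by linarith
  have hu20 : 0 < u₂ := by linarith
  set P := u₁ * (γ ^ 2 - 1) * (u₂ * γ ^ 2 - 1) / (γ ^ 2 * (u₁ + u₂) * (u₁ + 1)) with hP
  set Q := u₂ * (γ ^ 2 - 1) * (u₁ * γ ^ 2 + 1) / ((u₁ + u₂) * (u₂ * γ ^ 4 - 1)) with hQ
  have hP0 : 0 < P := by positivity
  have hQ0 : 0 < Q := by positivity
  have hQ1' : 1 - Q = (u₂ * γ ^ 2 - 1) * (u₂ * γ ^ 2 + u₁) / ((u₁ + u₂) * (u₂ * γ ^ 4 - 1)) := by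
    rw [hQ]; field_simp; ring
  have hQ1 : 0 < 1 - Q := by rw [hQ1']; positivity
  set a := √u₁ with ha
  set b := √u₂ with hb
  have ha0 : 0 < a := Real.sqrt_pos.2 hu10
  have hb0 : 0 < b := Real.sqrt_pos.2 hu20
  have ha2 : a ^ 2 = u₁ := Real.sq_sqrt hu10.le
  have hb2 : b ^ 2 = u₂ := Real.sq_sqrt hu20.le
  have hat : a * t₁ = arsinh √P := by rw [ht₁]; field_simp
  have hbt : b * t₂ = arcsin √Q := by rw [ht₂]; field_simp
  have hsP : 0 < √P := Real.sqrt_pos.2 hP0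
  have hsQ : 0 < √Q := Real.sqrt_pos.2 hQ0
  have ht1 : 0 < t₁ := by
    have : 0 < arsinh √P := Real.arsinh_pos_iff.2 hsP
    rw [ht₁]; positivity
  have ht2 : 0 < t₂ := by
    have : 0 < arcsin √Q := Real.arcsin_pos.2 hsQ
    rw [ht₂]; positivity
  refine ⟨ht1, ht2, ?_⟩
  have hsinh : sinh (a * t₁) = √P := by rw [hat, Real.sinh_arsinh]
  have hsin : sin (b * t₂) = √Q := by
    rw [hbt, Real.sin_arcsin (by linarith)]
    exact Real.sqrt_le_one.2 (by linarith)
  have hcos : 0 ≤ cos (b * t₂) := by rw [hbt]; exact Real.cos_arcsin_nonneg _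
  have hcos2 : cos (b * t₂) ^ 2 = 1 - Q := by
    rw [Real.cos_sq', hsin, Real.sq_sqrt hQ0.le]
  have hcosh2 : cosh (a * t₁) ^ 2 = 1 + P := by
    rw [Real.cosh_sq, hsinh, Real.sq_sqrt hP0.le]; ring
  set T := t₁ + t₂ with hT
  obtain ⟨L, hL⟩ : ∃ L, L = 1 + 1 / u₁ := ⟨_, rfl⟩
  obtain ⟨K, hK⟩ : ∃ K, K = γ ^ 2 - 1 / (u₂ * γ ^ 2) := ⟨_, rfl⟩
  have hL0 : 0 < L := by rw [hL]; positivity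
  have hK' : K = (u₂ * γ ^ 4 - 1) / (u₂ * γ ^ 2) := by rw [hK]; field_simp
  have hp2' := hp2.ne'
  have hK0 : 0 < K := by
    rw [hK']; positivity
  obtain ⟨A, hA⟩ : ∃ A : ℝ → ℝ, A = fun t => 1 + L * sinh (a * t) ^ 2 := ⟨_, rfl⟩
  obtain ⟨DA, hDA⟩ : ∃ A : ℝ → ℝ, A = fun t => 2 * a * L * sinh (a * t) * cosh (a * t) := ⟨_, rfl⟩
  obtain ⟨B, hB⟩ : ∃ A : ℝ → ℝ, A = fun t => γ ^ 2 - K * sin (b * (T - t)) ^ 2 := ⟨_, rfl⟩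
  obtain ⟨DB, hDB⟩ : ∃ A : ℝ → ℝ,
    A = fun t => 2 * b * K * sin (b * (T - t)) * cos (b * (T - t)) := ⟨_, rfl⟩
  have hA0 : ∀ t, 0 < A t := fun t => by rw [hA]; positivity
  have hB0 : ∀ t, 0 < B t := fun t => by
    have h1 : B t = γ ^ 2 * cos (b * (T - t)) ^ 2 + 1 / (u₂ * γ ^ 2) * sin (b * (T - t)) ^ 2 := by
      simp only [hB, hK, Real.cos_sq']; ring
    rw [h1]
    have h2 := Real.sin_sq_add_cos_sq (b * (T - t))
    rcases (sq_nonneg (sin (b * (T - t)))).eq_or_lt with h3 | h3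
    · have : cos (b * (T - t)) ^ 2 = 1 := by linarith
      rw [← h3, this]; nlinarith
    · positivity
  have lA : ∀ t, HasDerivAt (fun t : ℝ => a * t) a t := fun t => by
    simpa using (hasDerivAt_id t).const_mul a
  have lB : ∀ t, HasDerivAt (fun t : ℝ => b * (T - t)) (-b) t := fun t => by
    simpa using ((hasDerivAt_id t).const_sub T).const_mul b
  have dA : ∀ t, HasDerivAt A (DA t) t := fun t => by
    rw [hA, hDA]
    refine ((((lA t).sinh.pow 2).const_mul L).const_add 1).congr_deriv ?_
    push_cast; ring
  have dDA : ∀ t, HasDerivAt DA (2 * a ^ 2 * L * (cosh (a * t) ^ 2 + sinh (a * t) ^ 2)) t :=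
    fun t => by
    rw [hDA]
    refine (((lA t).sinh.const_mul (2 * a * L)).mul (lA t).cosh).congr_deriv ?_
    ring
  have dB : ∀ t, HasDerivAt B (DB t) t := fun t => by
    rw [hB, hDB]
    refine ((((lB t).sin.pow 2).const_mul K).const_sub (γ ^ 2)).congr_deriv ?_
    push_cast; ring
  have dDB : ∀ t, HasDerivAt DB
      (-(2 * b ^ 2 * K * (cos (b * (T - t)) ^ 2 - sin (b * (T - t)) ^ 2))) t :=
    fun t => by
    rw [hDB]
    refine (((lB t).sin.const_mul (2 * b * K)).mul (lB t).cos).congr_deriv ?_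
    ring
  have eA : ∀ t, A t * (2 * a ^ 2 * L * (cosh (a * t) ^ 2 + sinh (a * t) ^ 2)) / 2
      - DA t ^ 2 / 4 = 1 - (-u₁) * A t ^ 2 := fun t => by
    simp only [hA, hDA, mul_pow, Real.cosh_sq, ha2]
    rw [hL]; field_simp; ring
  have eB : ∀ t, B t * (-(2 * b ^ 2 * K * (cos (b * (T - t)) ^ 2 - sin (b * (T - t)) ^ 2))) / 2
      - DB t ^ 2 / 4 = 1 - u₂ * B t ^ 2 := fun t => by
    simp only [hB, hDB, mul_pow, Real.cos_sq', hb2]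
    rw [hK]; field_simp; ring
  have hTt : T - t₁ = t₂ := by rw [hT]; ring
  have mAB : A t₁ = B t₁ := by
    simp only [hA, hB, hTt, hsinh, hsin, Real.sq_sqrt hP0.le, Real.sq_sqrt hQ0.le]
    rw [hL, hK', hP, hQ]; generalize u₂ * γ ^ 4 - 1 = W at hp2' ⊢; field_simp; ring
  have mD : DA t₁ = DB t₁ := by
    have h1 : 0 ≤ DA t₁ := by simp only [hDA, hsinh]; positivity
    have h2 : 0 ≤ DB t₁ := by simp only [hDB, hTt, hsin]; positivity
    refine (sq_eq_sq₀ h1 h2).1 ?_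
    simp only [hDA, hDB, mul_pow, hTt, hsinh, hsin, Real.sq_sqrt hP0.le, Real.sq_sqrt hQ0.le,
      hcos2, hcosh2, ha2, hb2]
    rw [hQ1', hL, hK', hP, hQ]; generalize u₂ * γ ^ 4 - 1 = W at hp2' ⊢; field_simp; ring
  have sA := fun t => erm_sqrt (dA t) (dDA t) (hA0 t) (eA t)
  have sB := fun t => erm_sqrt (dB t) (dDB t) (hB0 t) (eB t)
  have m1 : √(A t₁) = √(B t₁) := by rw [mAB]
  have m2 : DA t₁ / (2 * √(A t₁)) = DB t₁ / (2 * √(B t₁)) := by rw [mAB, mD]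
  have hG := glue_all (fun t => (sA t).1) (fun t => (sB t).1) m1 m2
  have hcx2 : Continuous (fun t => if t ≤ t₁ then DA t / (2 * √(A t)) else DB t / (2 * √(B t))) := by
    refine Continuous.if_le ?_ ?_ continuous_id continuous_const ?_
    · exact continuous_iff_continuousAt.2 fun t => (sA t).2.continuousAt
    · exact continuous_iff_continuousAt.2 fun t => (sB t).2.continuousAt
    · rintro t rfl; exact m2
  have hTn : ¬ T ≤ t₁ := by rw [hT]; linarith
  refine ⟨fun t => if t ≤ t₁ then √(A t) else √(B t),
    fun t => if t ≤ t₁ then DA t / (2 * √(A t)) else DB t / (2 * √(B t)),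
    fun t _ => (hG t).continuousAt.continuousWithinAt, hcx2.continuousOn, ?_, ?_, ?_, ?_, ?_,
    fun t _ => (hG t).hasDerivWithinAt, ?_, ?_⟩
  · intro t _
    dsimp only
    split_ifs
    · exact Real.sqrt_pos.2 (hA0 t)
    · exact Real.sqrt_pos.2 (hB0 t)
  · simp [ht1.le, hA]
  · simp [ht1.le, hDA]
  · simp [hTn, hB, Real.sqrt_sq hγ0.le]
  · simp [hTn, hDB]
  · intro t ht
    have h := (sA t).2.hasDerivWithinAt (s := Set.Icc 0 t₁)
    rw [neg_neg] at h
    simp only [if_pos ht.2]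
    exact h.congr (fun s hs => if_pos hs.2) (if_pos ht.2)
  · intro t ht
    have h := (sB t).2.hasDerivWithinAt (s := Set.Icc t₁ T)
    have q1 : ∀ s ∈ Set.Icc t₁ T, (if s ≤ t₁ then √(A s) else √(B s)) = √(B s) := by
      intro s hs
      split_ifs with h1
      · rw [le_antisymm h1 hs.1, m1]
      · rfl
    have q2 : ∀ s ∈ Set.Icc t₁ T, (if s ≤ t₁ then DA s / (2 * √(A s)) else DB s / (2 * √(B s)))
        = DB s / (2 * √(B s)) := by
      intro s hs
      split_ifs with h1
      · rw [le_antisymm h1 hs.1, m2]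
      · rfl
    simp only [q1 t ht]
    exact h.congr q2 (q2 t ht)
end

section
/- For every γ > 1, arsinh((γ² − 1)/(2γ)) = ln γ. Consequently, for u₁ = u₂ = 1 the one-switching transfer time from (1,0) to (γ,0) equals T₀(γ) = arsinh(√((γ² − 1)(γ² − 1)/(4γ²))) + arcsin(√((γ² − 1)(γ² + 1)/(2(γ⁴ − 1)))) = ln γ + π/4, so T₀(γ)/ln γ → 1 as γ → ∞: the cooling time diverges logarithmically as the target temperature approaches absolute zero, exhibiting the unattainability principle of the third law of thermodynamics. -/
open Real Filter

/-- For `γ > 1`, `arsinh((γ² − 1)/(2γ)) = ln γ`. Consequently, for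
`u₁ = u₂ = 1` the one-switching transfer time from `(1,0)` to `(γ,0)` equals
`T₀(γ) = ln γ + π/4`, and `T₀(γ)/ln γ → 1` as `γ → ∞`: the cooling time
diverges logarithmically as the target temperature approaches absolute zero
(the unattainability principle of the third law of thermodynamics). -/
theorem cooling_time_logarithmic :
    (∀ γ : ℝ, 1 < γ → Real.arsinh ((γ ^ 2 - 1) / (2 * γ)) = Real.log γ) ∧
    (∀ γ : ℝ, 1 < γ →
      Real.arsinh (Real.sqrt ((γ ^ 2 - 1) * (γ ^ 2 - 1) / (4 * γ ^ 2))) +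
        Real.arcsin (Real.sqrt ((γ ^ 2 - 1) * (γ ^ 2 + 1) / (2 * (γ ^ 4 - 1))))
      = Real.log γ + π / 4) ∧
    Filter.Tendsto (fun γ : ℝ =>
      (Real.arsinh (Real.sqrt ((γ ^ 2 - 1) * (γ ^ 2 - 1) / (4 * γ ^ 2))) +
        Real.arcsin (Real.sqrt ((γ ^ 2 - 1) * (γ ^ 2 + 1) / (2 * (γ ^ 4 - 1)))))
        / Real.log γ)
      Filter.atTop (nhds 1) := by
  have h1 : ∀ γ : ℝ, 1 < γ → Real.arsinh ((γ ^ 2 - 1) / (2 * γ)) = Real.log γ := by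
    intro γ hγ
    have h0 : 0 < γ := by linarith
    rw [← Real.arsinh_sinh (Real.log γ), Real.sinh_eq, Real.exp_neg, Real.exp_log h0]
    congr 1
    field_simp
  have h2 : ∀ γ : ℝ, 1 < γ →
      Real.arsinh (Real.sqrt ((γ ^ 2 - 1) * (γ ^ 2 - 1) / (4 * γ ^ 2))) +
        Real.arcsin (Real.sqrt ((γ ^ 2 - 1) * (γ ^ 2 + 1) / (2 * (γ ^ 4 - 1))))
      = Real.log γ + π / 4 := by
    intro γ hγ
    have h0 : 0 < γ := by linarith
    have hp : 0 < γ ^ 2 - 1 := by nlinarith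
    have hq : 0 < γ ^ 2 + 1 := by positivity
    have e1 : (γ ^ 2 - 1) * (γ ^ 2 - 1) / (4 * γ ^ 2) = ((γ ^ 2 - 1) / (2 * γ)) ^ 2 := by
      rw [div_pow]; congr 1 <;> ring
    have e2 : (γ ^ 2 - 1) * (γ ^ 2 + 1) / (2 * (γ ^ 4 - 1)) = (Real.sin (π / 4)) ^ 2 := by
      have : γ ^ 4 - 1 = (γ ^ 2 - 1) * (γ ^ 2 + 1) := by ring
      rw [this, Real.sin_pi_div_four, div_pow, Real.sq_sqrt (by norm_num)]
      have := (mul_pos hp hq).ne'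
      rw [div_eq_div_iff (by positivity) (by norm_num)]
      ring
    have hpi := Real.pi_pos
    have hs : 0 ≤ Real.sin (π / 4) :=
      Real.sin_nonneg_of_nonneg_of_le_pi (by linarith) (by linarith)
    rw [e1, e2, Real.sqrt_sq (by positivity), Real.sqrt_sq hs, h1 γ hγ,
      Real.arcsin_sin (by linarith) (by linarith)]
  refine ⟨h1, h2, ?_⟩
  have h3 : Filter.Tendsto (fun γ : ℝ => 1 + (π / 4) / Real.log γ) Filter.atTop (nhds 1) := by
    simpa using (Real.tendsto_log_atTop.const_div_atTop (π / 4)).const_add 1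
  refine h3.congr' ?_
  filter_upwards [Filter.eventually_gt_atTop 1] with γ hγ
  have := (Real.log_pos hγ).ne'
  rw [h2 γ hγ, add_div, div_self this]
end
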